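/- arXiv:2403.09123 — 2 statements merged into one kernel-verified Lean document; each statement's English description precedes it below -/
import Mathlib

section
/- Fix β ∈ (0,1). Let B ⊆ {2,…,K} be nonempty, J ⊆ (0,∞) an open interval, and N_a : J → (0,∞) for a ∈ [K] differentiable functions such that for all N ∈ J: Σ_{a∈[K]} N_a(N) = N; N_1(N) = β·N; N_a is constant on J (with value N_a^0) for every a ∈ B̄^c; and W_a(N_1(N), N_a(N)) takes a common value I_B(N) for all a ∈ B. Then for all N ∈ J: (1) N_1'(N) = β and, for every b ∈ B, N_b'(N) = (((1−β)·N − Σ_{a∈B} N_a)·d_B + N_b·d_{b,b}) / (N·d_{b,b}); (2) I_B'(N) = (1 − β − (Σ_{a∈B} N_a)/N)·d_B + I_B(N)/N; (3) there exists a constant c > 0, depending only on μ and β and not on N, such that I_B'(N) ≥ c, while for every a ∈ B̄^c the index I_a(N) = W_a(N_1(N), N_a^0) satisfies I_a(N) ≤ N_a^0·d(μ_a, μ_1). -/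
open scoped BigOperators

/-- A single-parameter exponential family, given by the log-partition function `b`,
smooth with positive second derivative on an open interval `Θ`, together with the
inverse `θof` of `b'` on the set of means `S = b'(Θ)`. -/
structure SPEF where
  Θ : Set ℝ
  Θ_isOpen : IsOpen Θ
  Θ_ordConnected : Set.OrdConnected Θ
  Θ_nonempty : Θ.Nonempty
  b : ℝ → ℝ
  b_smooth : ContDiffOn ℝ (⊤ : ℕ∞) b Θ
  b_conv : ∀ t ∈ Θ, 0 < iteratedDeriv 2 b t
  θof : ℝ → ℝ
  θof_mem : ∀ μ ∈ deriv b '' Θ, θof μ ∈ Θ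
  θof_spec : ∀ μ ∈ deriv b '' Θ, deriv b (θof μ) = μ

namespace SPEF

/-- The set of means of the family. -/
def S (F : SPEF) : Set ℝ := deriv F.b '' F.Θ

/-- KL divergence `d(μ, x)` between the members of the family with means `μ` and `x`. -/
noncomputable def d (F : SPEF) (μ x : ℝ) : ℝ :=
  (F.θof μ - F.θof x) * μ - F.b (F.θof μ) + F.b (F.θof x)

end SPEF

/-- A `K`-armed bandit instance with arm distributions in a fixed SPEF; arm `0`
(the paper's arm `1`) is the unique best arm. -/
structure Bandit (K : ℕ) [NeZero K] extends SPEF where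
  two_le : 2 ≤ K
  μ : Fin K → ℝ
  μ_mem : ∀ a, μ a ∈ SPEF.S toSPEF
  μ_best : ∀ a : Fin K, a ≠ 0 → μ a < μ 0

namespace Bandit

variable {K : ℕ} [NeZero K]

/-- KL divergence of the underlying family. -/
noncomputable def d (M : Bandit K) : ℝ → ℝ → ℝ := M.toSPEF.d

/-- The weighted mean `x_{1,a}(N₁, N_a)`. -/
noncomputable def x1 (M : Bandit K) (a : Fin K) (N1 Na : ℝ) : ℝ :=
  (N1 * M.μ 0 + Na * M.μ a) / (N1 + Na)

/-- The index `W_a(N₁, N_a)` of an arm `a ≠ 1`. -/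
noncomputable def W (M : Bandit K) (a : Fin K) (N1 Na : ℝ) : ℝ :=
  N1 * M.d (M.μ 0) (M.x1 a N1 Na) + Na * M.d (M.μ a) (M.x1 a N1 Na)

/-- The set `{2, …, K}` of suboptimal arms. -/
def alt (K : ℕ) [NeZero K] : Finset (Fin K) := Finset.univ.filter (fun a => a ≠ 0)

/-- The anchor function `g(μ, N)`. -/
noncomputable def g (M : Bandit K) (Nv : Fin K → ℝ) : ℝ :=
  (∑ a ∈ alt K, M.d (M.μ 0) (M.x1 a (Nv 0) (Nv a)) / M.d (M.μ a) (M.x1 a (Nv 0) (Nv a))) - 1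

end Bandit

open Bandit

/-- The quantity `d_B = (Σ_{a∈B} d(μ_a, x_{1,a})⁻¹)⁻¹`. -/
noncomputable def Bandit.dB {K : ℕ} [NeZero K] (M : Bandit K) (B : Finset (Fin K))
    (Nv : Fin K → ℝ) : ℝ :=
  (∑ a ∈ B, (M.d (M.μ a) (M.x1 a (Nv 0) (Nv a)))⁻¹)⁻¹

/-!
The mean `x_{1,a}` minimises `y ↦ N₁ d(μ₁, y) + N_a d(μ_a, y)`, so by the envelope principle the
index `W_a` moves at the rate `N₁' d(μ₁, x_{1,a}) + N_a' d(μ_a, x_{1,a})`, which for every `a ∈ B`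
is the common rate `I_B'`. Subtracting `I_B / N = W_a / N` cancels the first term, since
`N₁' = β = N₁ / N`, and leaves `(N_a' - N_a / N) d_{a,a} = I_B' - I_B / N`. Dividing by `d_{a,a}`
and summing over `B`, where `∑ N_a' = 1 - β`, yields the index equation, and with it the allocation
rates.

Without the subtraction, `N_a' d_{a,a} ≤ I_B'`, and the same summation gives `(1 - β) d_B ≤ I_B'`.
Finally `d_{a,a}` decreases in `N_a / N₁`, which is at most `(1 - β) / β`; hence `d_B` is bounded
below uniformly.
-/

section HarmonicSum

variable {ι 𝕜 : Type*} [Field 𝕜] {B : Finset ι} {x D : ι → 𝕜} {y : 𝕜}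

lemma sum_mul_inv_sum_inv_eq (hD : ∀ a ∈ B, D a ≠ 0) (hsum : ∑ a ∈ B, (D a)⁻¹ ≠ 0)
    (h : ∀ a ∈ B, x a * D a = y) : (∑ a ∈ B, x a) * (∑ a ∈ B, (D a)⁻¹)⁻¹ = y := by
  rw [← div_eq_mul_inv, div_eq_iff hsum, Finset.mul_sum]
  exact Finset.sum_congr rfl fun a ha => (eq_mul_inv_iff_mul_eq₀ (hD a ha)).2 (h a ha)

lemma sum_mul_inv_sum_inv_le [LinearOrder 𝕜] [IsStrictOrderedRing 𝕜] (hB : B.Nonempty)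
    (hD : ∀ a ∈ B, 0 < D a) (h : ∀ a ∈ B, x a * D a ≤ y) :
    (∑ a ∈ B, x a) * (∑ a ∈ B, (D a)⁻¹)⁻¹ ≤ y := by
  rw [← div_eq_mul_inv, div_le_iff₀ (Finset.sum_pos (fun a ha => inv_pos.2 (hD a ha)) hB),
    Finset.mul_sum]
  exact Finset.sum_le_sum fun a ha => (le_mul_inv_iff₀ (hD a ha)).2 (h a ha)

end HarmonicSum

namespace SPEF

variable (F : SPEF) {μ x y t : ℝ}

lemma hasDerivAt_b (ht : t ∈ F.Θ) : HasDerivAt F.b (deriv F.b t) t :=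
  ((F.b_smooth.contDiffAt (F.Θ_isOpen.mem_nhds ht)).differentiableAt (by simp)).hasDerivAt

lemma hasStrictDerivAt_deriv_b (ht : t ∈ F.Θ) :
    HasStrictDerivAt (deriv F.b) (iteratedDeriv 2 F.b t) t := by
  have hsmooth : ContDiffAt ℝ (⊤ : ℕ∞) (deriv F.b) t :=
    ((contDiffOn_infty_iff_deriv_of_isOpen F.Θ_isOpen).1 F.b_smooth).2.contDiffAt
      (F.Θ_isOpen.mem_nhds ht)
  rw [iteratedDeriv_succ, iteratedDeriv_one]
  exact hsmooth.hasStrictDerivAt (by simp)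

lemma continuousOn_deriv_b : ContinuousOn (deriv F.b) F.Θ := fun _ ht =>
  (F.hasStrictDerivAt_deriv_b ht).hasDerivAt.continuousAt.continuousWithinAt

lemma strictMonoOn_deriv_b : StrictMonoOn (deriv F.b) F.Θ := by
  refine strictMonoOn_of_deriv_pos F.Θ_ordConnected.convex F.continuousOn_deriv_b fun t ht => ?_
  have ht := interior_subset ht
  rw [(F.hasStrictDerivAt_deriv_b ht).hasDerivAt.deriv]
  exact F.b_conv t ht

lemma strictConvexOn_b : StrictConvexOn ℝ F.Θ F.b :=
  (F.strictMonoOn_deriv_b.mono interior_subset).strictConvexOn_of_deriv F.Θ_ordConnected.convex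
    F.b_smooth.continuousOn

lemma ordConnected_S : F.S.OrdConnected :=
  (F.Θ_ordConnected.isPreconnected.image _ F.continuousOn_deriv_b).ordConnected

lemma θof_deriv_b (ht : t ∈ F.Θ) : F.θof (deriv F.b t) = t :=
  F.strictMonoOn_deriv_b.injOn (F.θof_mem _ ⟨t, ht, rfl⟩) ht (F.θof_spec _ ⟨t, ht, rfl⟩)

lemma strictMonoOn_θof : StrictMonoOn F.θof F.S := by
  rintro _ ⟨s, hs, rfl⟩ _ ⟨t, ht, rfl⟩ hst
  rw [F.θof_deriv_b hs, F.θof_deriv_b ht]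
  exact (F.strictMonoOn_deriv_b.lt_iff_lt hs ht).1 hst

lemma hasDerivAt_θof (hx : x ∈ F.S) :
    HasDerivAt F.θof (iteratedDeriv 2 F.b (F.θof x))⁻¹ x := by
  obtain ⟨t, ht, rfl⟩ := hx
  rw [F.θof_deriv_b ht]
  refine ((F.hasStrictDerivAt_deriv_b ht).to_local_left_inverse (F.b_conv t ht).ne' ?_).hasDerivAt
  filter_upwards [F.Θ_isOpen.mem_nhds ht] with s hs using F.θof_deriv_b hs

lemma hasDerivAt_d (μ : ℝ) (hx : x ∈ F.S) :
    HasDerivAt (F.d μ) ((iteratedDeriv 2 F.b (F.θof x))⁻¹ * (x - μ)) x := by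
  have hθ := F.hasDerivAt_θof hx
  have hb : HasDerivAt F.b x (F.θof x) := by
    simpa only [F.θof_spec x hx] using F.hasDerivAt_b (F.θof_mem x hx)
  exact ((((hθ.const_sub (F.θof μ)).mul_const μ).sub_const (F.b (F.θof μ))).add
    (hb.comp x hθ)).congr_deriv (by ring)

lemma d_self (μ : ℝ) : F.d μ μ = 0 := by simp [d]

lemma d_pos (hμ : μ ∈ F.S) (hx : x ∈ F.S) (hne : μ ≠ x) : 0 < F.d μ x := by
  have hθμ := F.θof_mem μ hμ
  have hθx := F.θof_mem x hx
  have hb : HasDerivAt F.b μ (F.θof μ) := by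
    simpa only [F.θof_spec μ hμ] using F.hasDerivAt_b hθμ
  rcases hne.lt_or_gt with hlt | hlt
  · have hθ := F.strictMonoOn_θof hμ hx hlt
    have hslope := F.strictConvexOn_b.lt_slope_of_hasDerivAt hθμ hθx hθ hb
    rw [slope_def_field, lt_div_iff₀ (sub_pos.2 hθ)] at hslope
    rw [d]
    linarith
  · have hθ := F.strictMonoOn_θof hx hμ hlt
    have hslope := F.strictConvexOn_b.slope_lt_of_hasDerivAt hθx hθμ hθ hb
    rw [slope_def_field, div_lt_iff₀ (sub_pos.2 hθ)] at hslope
    rw [d]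
    linarith

lemma d_nonneg (hμ : μ ∈ F.S) (hx : x ∈ F.S) : 0 ≤ F.d μ x := by
  rcases eq_or_ne μ x with rfl | hne
  · exact (F.d_self μ).ge
  · exact (F.d_pos hμ hx hne).le

lemma d_sub_d (μ x y : ℝ) : F.d μ y - F.d μ x = F.d x y + (F.θof y - F.θof x) * (x - μ) := by
  simp only [d]
  ring

lemma monotoneOn_d (μ : ℝ) : MonotoneOn (F.d μ) (F.S ∩ Set.Ici μ) := by
  rintro x ⟨hx, hμx⟩ y ⟨hy, -⟩ hxy
  have hθ : 0 ≤ F.θof y - F.θof x := sub_nonneg.2 (F.strictMonoOn_θof.monotoneOn hx hy hxy)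
  rw [← sub_nonneg, d_sub_d]
  exact add_nonneg (F.d_nonneg hx hy) (mul_nonneg hθ (sub_nonneg.2 hμx))

end SPEF

namespace Bandit

variable {K : ℕ} [NeZero K] (M : Bandit K)

/-- The divergence `d_{b,a} = d(μ_b, x_{1,a}(n₁, n_a))` from arm `b` to the weighted mean of arms
`1` and `a` under the allocation `n`; the paper's `d_{a,a}` is `M.dMix n a a`, and `d_{1,a}` is
`M.dMix n 0 a`. -/
noncomputable def dMix (n : Fin K → ℝ) (b a : Fin K) : ℝ :=
  M.d (M.μ b) (M.x1 a (n 0) (n a))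

section Index

variable {a : Fin K} {n m : Fin K → ℝ}

lemma ne_zero_of_mem_alt (ha : a ∈ alt K) : a ≠ 0 :=
  (Finset.mem_filter.1 ha).2

lemma alt_nonempty (hK : 2 ≤ K) : (alt K).Nonempty := by
  have : Nontrivial (Fin K) := Fin.nontrivial_iff_two_le.2 hK
  obtain ⟨a, ha⟩ := exists_ne (0 : Fin K)
  exact ⟨a, Finset.mem_filter.2 ⟨Finset.mem_univ a, ha⟩⟩

lemma x1_mem_Ioo (ha : a ≠ 0) (h0 : 0 < n 0) (hna : 0 < n a) :
    M.x1 a (n 0) (n a) ∈ Set.Ioo (M.μ a) (M.μ 0) := by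
  have hμ := M.μ_best a ha
  constructor
  · rw [x1, lt_div_iff₀ (by positivity)]
    linarith [mul_lt_mul_of_pos_left hμ h0]
  · rw [x1, div_lt_iff₀ (by positivity)]
    linarith [mul_lt_mul_of_pos_left hμ hna]

lemma x1_mem_S (ha : a ≠ 0) (h0 : 0 < n 0) (hna : 0 < n a) :
    M.x1 a (n 0) (n a) ∈ M.toSPEF.S :=
  M.ordConnected_S.out (M.μ_mem a) (M.μ_mem 0) (Set.Ioo_subset_Icc_self (M.x1_mem_Ioo ha h0 hna))

lemma x1_le_x1 (ha : a ≠ 0) (hm : 0 < m 0 + m a) (hn : 0 < n 0 + n a)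
    (hratio : m 0 * n a ≤ n 0 * m a) :
    M.x1 a (m 0) (m a) ≤ M.x1 a (n 0) (n a) := by
  rw [x1, x1, div_le_div_iff₀ hm hn]
  linarith [mul_le_mul_of_nonneg_right hratio (sub_pos.2 (M.μ_best a ha)).le]

lemma dMix_nonneg (b : Fin K) (ha : a ≠ 0) (h0 : 0 < n 0) (hna : 0 < n a) : 0 ≤ M.dMix n b a :=
  M.d_nonneg (M.μ_mem b) (M.x1_mem_S ha h0 hna)

lemma dMix_self_pos (ha : a ≠ 0) (h0 : 0 < n 0) (hna : 0 < n a) : 0 < M.dMix n a a :=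
  M.d_pos (M.μ_mem a) (M.x1_mem_S ha h0 hna) (M.x1_mem_Ioo ha h0 hna).1.ne

lemma dMix_self_le_dMix_self (ha : a ≠ 0) (hm0 : 0 < m 0) (hma : 0 < m a) (hn0 : 0 < n 0)
    (hna : 0 < n a) (hratio : m 0 * n a ≤ n 0 * m a) : M.dMix m a a ≤ M.dMix n a a :=
  M.monotoneOn_d (M.μ a) ⟨M.x1_mem_S ha hm0 hma, (M.x1_mem_Ioo ha hm0 hma).1.le⟩
    ⟨M.x1_mem_S ha hn0 hna, (M.x1_mem_Ioo ha hn0 hna).1.le⟩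
    (M.x1_le_x1 ha (add_pos hm0 hma) (add_pos hn0 hna) hratio)

lemma W_eq (n : Fin K → ℝ) (a : Fin K) :
    M.W a (n 0) (n a) = n 0 * M.dMix n 0 a + n a * M.dMix n a a :=
  rfl

lemma W_add_mul_d (h : n 0 + n a ≠ 0) (y : ℝ) :
    M.W a (n 0) (n a) + (n 0 + n a) * M.d (M.x1 a (n 0) (n a)) y =
      n 0 * M.d (M.μ 0) y + n a * M.d (M.μ a) y := by
  have hx : (n 0 + n a) * M.x1 a (n 0) (n a) = n 0 * M.μ 0 + n a * M.μ a := mul_div_cancel₀ _ h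
  simp only [W, d, SPEF.d]
  linear_combination (M.θof (M.x1 a (n 0) (n a)) - M.θof y) * hx

lemma W_le (ha : a ≠ 0) (h0 : 0 < n 0) (hna : 0 < n a) :
    M.W a (n 0) (n a) ≤ n a * M.d (M.μ a) (M.μ 0) := by
  have hsum := add_pos h0 hna
  calc M.W a (n 0) (n a)
      ≤ M.W a (n 0) (n a) + (n 0 + n a) * M.d (M.x1 a (n 0) (n a)) (M.μ 0) :=
        le_add_of_nonneg_right <| mul_nonneg hsum.le (M.d_nonneg (M.x1_mem_S ha h0 hna) (M.μ_mem 0))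
    _ = n 0 * M.d (M.μ 0) (M.μ 0) + n a * M.d (M.μ a) (M.μ 0) := M.W_add_mul_d hsum.ne' _
    _ = n a * M.d (M.μ a) (M.μ 0) := by rw [d, M.d_self, mul_zero, zero_add]

lemma hasDerivAt_W {n : ℝ → Fin K → ℝ} {v₀ v t : ℝ} (ha : a ≠ 0) (h0 : 0 < n t 0)
    (hna : 0 < n t a) (hn0 : HasDerivAt (fun s => n s 0) v₀ t)
    (hn : HasDerivAt (fun s => n s a) v t) :
    HasDerivAt (fun s => M.W a (n s 0) (n s a))
      (v₀ * M.dMix (n t) 0 a + v * M.dMix (n t) a a) t := by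
  have hne := (add_pos h0 hna).ne'
  have hd := fun μ => M.hasDerivAt_d μ (M.x1_mem_S ha h0 hna)
  obtain ⟨x', hx'⟩ : ∃ x', HasDerivAt (fun s => M.x1 a (n s 0) (n s a)) x' t :=
    ⟨_, ((hn0.mul_const _).add (hn.mul_const _)).div (hn0.add hn) hne⟩
  have hmean : (n t 0 + n t a) * M.x1 a (n t 0) (n t a) = n t 0 * M.μ 0 + n t a * M.μ a :=
    mul_div_cancel₀ _ hne
  refine ((hn0.mul ((hd (M.μ 0)).comp t hx')).add
    (hn.mul ((hd (M.μ a)).comp t hx'))).congr_deriv ?_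
  -- The terms in `x'` cancel, because `x_{1,a}` is a critical point of the objective.
  simp only [Function.comp_apply, dMix, d]
  linear_combination
    (iteratedDeriv 2 M.b (M.θof (M.x1 a (n t 0) (n t a))))⁻¹ * x' * hmean

end Index

section HarmonicDivergence

variable {B B' : Finset (Fin K)} {n m : Fin K → ℝ}

lemma dB_eq (B : Finset (Fin K)) (n : Fin K → ℝ) :
    M.dB B n = (∑ a ∈ B, (M.dMix n a a)⁻¹)⁻¹ :=
  rfl

lemma sum_inv_dMix_pos (hB : B.Nonempty) (hBalt : B ⊆ alt K) (h0 : 0 < n 0)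
    (hn : ∀ a ∈ B, 0 < n a) : 0 < ∑ a ∈ B, (M.dMix n a a)⁻¹ :=
  Finset.sum_pos
    (fun a ha => inv_pos.2 (M.dMix_self_pos (ne_zero_of_mem_alt (hBalt ha)) h0 (hn a ha))) hB

lemma dB_le_dB (hB : B.Nonempty) (hBB' : B ⊆ B') (hB' : B' ⊆ alt K) (hm0 : 0 < m 0)
    (hm : ∀ a ∈ B', 0 < m a) (hn0 : 0 < n 0) (hn : ∀ a ∈ B, 0 < n a)
    (hratio : ∀ a ∈ B, m 0 * n a ≤ n 0 * m a) : M.dB B' m ≤ M.dB B n := by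
  have hne : ∀ a ∈ B', a ≠ 0 := fun a ha => ne_zero_of_mem_alt (hB' ha)
  refine inv_anti₀ (M.sum_inv_dMix_pos hB (hBB'.trans hB') hn0 hn) ?_
  calc ∑ a ∈ B, (M.dMix n a a)⁻¹
      ≤ ∑ a ∈ B, (M.dMix m a a)⁻¹ := Finset.sum_le_sum fun a ha =>
        inv_anti₀ (M.dMix_self_pos (hne a (hBB' ha)) hm0 (hm a (hBB' ha)))
          (M.dMix_self_le_dMix_self (hne a (hBB' ha)) hm0 (hm a (hBB' ha)) hn0 (hn a ha)
            (hratio a ha))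
    _ ≤ ∑ a ∈ B', (M.dMix m a a)⁻¹ := Finset.sum_le_sum_of_subset_of_nonneg hBB' fun a ha _ =>
        inv_nonneg.2 (M.dMix_nonneg a (hne a ha) hm0 (hm a ha))

lemma exists_pos_le_dB {r : ℝ} (hr : 0 < r) :
    ∃ δ, 0 < δ ∧ ∀ (B : Finset (Fin K)) (n : Fin K → ℝ), B.Nonempty → B ⊆ alt K → 0 < n 0 →
      (∀ a ∈ B, 0 < n a) → (∀ a ∈ B, n a ≤ r * n 0) → δ ≤ M.dB B n := by
  -- The extreme allocation, which gives every arm of `alt K` the largest admissible ratio.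
  let m : Fin K → ℝ := Function.update (fun _ => r) 0 1
  have hm0 : m 0 = 1 := Function.update_self ..
  have hm : ∀ a ∈ alt K, m a = r := fun a ha => Function.update_of_ne (ne_zero_of_mem_alt ha) ..
  have hm0_pos : 0 < m 0 := hm0 ▸ one_pos
  have hm_pos : ∀ a ∈ alt K, 0 < m a := fun a ha => (hm a ha).symm ▸ hr
  refine ⟨M.dB (alt K) m,
    inv_pos.2 (M.sum_inv_dMix_pos (alt_nonempty M.two_le) subset_rfl hm0_pos hm_pos),
    fun B n hB hBalt hn0 hn hle => ?_⟩
  refine M.dB_le_dB hB hBalt subset_rfl hm0_pos hm_pos hn0 hn fun a ha => ?_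
  rw [hm0, hm a (hBalt ha), one_mul, mul_comm]
  exact hle a ha

end HarmonicDivergence

lemma sum_univ_eq_add_sum_sdiff_add_sum {B : Finset (Fin K)} (hB : B ⊆ alt K) (f : Fin K → ℝ) :
    ∑ a, f a = f 0 + (∑ a ∈ alt K \ B, f a + ∑ a ∈ B, f a) := by
  rw [Finset.sum_sdiff hB, alt, Finset.filter_ne', Finset.add_sum_erase _ _ (Finset.mem_univ 0)]

open Filter Topology in
/-- The fluid dynamics of β-EB-TCB at the instant `N`: near `N`, the allocation `n` keeps
`n₁ = β N`, moves only arm `1` and the arms in `B`, and gives the arms in `B` the common index `I`.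
The conditions on the trajectory are imposed on a neighbourhood of `N` only, and `v` is the vector
of allocation rates at `N`. -/
structure IsFluidAt (β : ℝ) (B : Finset (Fin K)) (n : ℝ → Fin K → ℝ) (v : Fin K → ℝ)
    (I : ℝ → ℝ) (N : ℝ) : Prop where
  subset_alt : B ⊆ alt K
  pos : ∀ a, 0 < n N a
  hasDerivAt : ∀ a, HasDerivAt (fun t => n t a) (v a) N
  sum_eq : ∀ᶠ t in 𝓝 N, ∑ a, n t a = t
  best_eq : ∀ᶠ t in 𝓝 N, n t 0 = β * t
  off_eq : ∀ a ∈ alt K \ B, ∀ᶠ t in 𝓝 N, n t a = n N a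
  index_eq : ∀ a ∈ B, ∀ᶠ t in 𝓝 N, M.W a (n t 0) (n t a) = I t

namespace IsFluidAt

variable {M} {β N : ℝ} {B : Finset (Fin K)} {n : ℝ → Fin K → ℝ} {v : Fin K → ℝ} {I : ℝ → ℝ}
  {a : Fin K}

lemma time_pos (h : M.IsFluidAt β B n v I N) : 0 < N :=
  h.sum_eq.self_of_nhds ▸ Finset.sum_pos (fun a _ => h.pos a) Finset.univ_nonempty

lemma share_pos (h : M.IsFluidAt β B n v I N) : 0 < β :=
  pos_of_mul_pos_left (h.best_eq.self_of_nhds ▸ h.pos 0) h.time_pos.le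

lemma ne_zero (h : M.IsFluidAt β B n v I N) (ha : a ∈ B) : a ≠ 0 :=
  ne_zero_of_mem_alt (h.subset_alt ha)

lemma dMix_self_pos (h : M.IsFluidAt β B n v I N) (ha : a ∈ B) : 0 < M.dMix (n N) a a :=
  M.dMix_self_pos (h.ne_zero ha) (h.pos 0) (h.pos a)

lemma rate_best (h : M.IsFluidAt β B n v I N) : v 0 = β :=
  (h.hasDerivAt 0).unique ((hasDerivAt_const_mul β).congr_of_eventuallyEq h.best_eq)

lemma rate_off (h : M.IsFluidAt β B n v I N) (ha : a ∈ alt K \ B) : v a = 0 :=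
  (h.hasDerivAt a).unique ((hasDerivAt_const N (n N a)).congr_of_eventuallyEq (h.off_eq a ha))

lemma sum_rate (h : M.IsFluidAt β B n v I N) : ∑ a ∈ B, v a = 1 - β := by
  have hone : ∑ a, v a = 1 := (HasDerivAt.fun_sum fun a _ => h.hasDerivAt a).unique
    ((hasDerivAt_id N).congr_of_eventuallyEq h.sum_eq)
  rw [sum_univ_eq_add_sum_sdiff_add_sum h.subset_alt, h.rate_best,
    Finset.sum_eq_zero fun a ha => h.rate_off ha] at hone
  linarith

lemma sum_le (h : M.IsFluidAt β B n v I N) : ∑ a ∈ B, n N a ≤ (1 - β) * N := by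
  have hsum := h.sum_eq.self_of_nhds
  have hoff : 0 ≤ ∑ a ∈ alt K \ B, n N a := Finset.sum_nonneg fun a _ => (h.pos a).le
  rw [sum_univ_eq_add_sum_sdiff_add_sum h.subset_alt, h.best_eq.self_of_nhds] at hsum
  linarith

lemma le_ratio_mul_best (h : M.IsFluidAt β B n v I N) (ha : a ∈ B) :
    n N a ≤ (1 - β) / β * n N 0 := by
  have hβ := h.share_pos
  calc n N a ≤ ∑ b ∈ B, n N b := Finset.single_le_sum (fun b _ => (h.pos b).le) ha
    _ ≤ (1 - β) * N := h.sum_le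
    _ = (1 - β) / β * n N 0 := by rw [h.best_eq.self_of_nhds]; field_simp

lemma index_eq_add (h : M.IsFluidAt β B n v I N) (ha : a ∈ B) :
    I N = β * N * M.dMix (n N) 0 a + n N a * M.dMix (n N) a a := by
  rw [← (h.index_eq a ha).self_of_nhds, W_eq]
  nth_rw 1 [h.best_eq.self_of_nhds]

lemma hasDerivAt_index_add (h : M.IsFluidAt β B n v I N) (ha : a ∈ B) :
    HasDerivAt I (β * M.dMix (n N) 0 a + v a * M.dMix (n N) a a) N := by
  rw [← h.rate_best]
  exact (M.hasDerivAt_W (h.ne_zero ha) (h.pos 0) (h.pos a) (h.hasDerivAt 0)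
    (h.hasDerivAt a)).congr_of_eventuallyEq ((h.index_eq a ha).mono fun _ => Eq.symm)

lemma hasDerivAt_index (h : M.IsFluidAt β B n v I N) (hB : B.Nonempty) :
    HasDerivAt I ((1 - β - (∑ a ∈ B, n N a) / N) * M.dB B (n N) + I N / N) N := by
  have hN := h.time_pos.ne'
  obtain ⟨b, hb⟩ := hB
  refine (h.hasDerivAt_index_add hb).congr_deriv (eq_add_of_sub_eq ?_)
  rw [← h.sum_rate, Finset.sum_div, ← Finset.sum_sub_distrib, dB_eq]
  refine (sum_mul_inv_sum_inv_eq (fun a ha => (h.dMix_self_pos ha).ne')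
    (M.sum_inv_dMix_pos ⟨b, hb⟩ h.subset_alt (h.pos 0) fun a _ => h.pos a).ne' fun a ha => ?_).symm
  rw [(h.hasDerivAt_index_add hb).unique (h.hasDerivAt_index_add ha), h.index_eq_add ha]
  field_simp
  ring

lemma index_rate_eq (h : M.IsFluidAt β B n v I N) (ha : a ∈ B) :
    (1 - β - (∑ b ∈ B, n N b) / N) * M.dB B (n N) + I N / N =
      β * M.dMix (n N) 0 a + v a * M.dMix (n N) a a :=
  (h.hasDerivAt_index ⟨a, ha⟩).unique (h.hasDerivAt_index_add ha)

lemma rate_eq (h : M.IsFluidAt β B n v I N) (ha : a ∈ B) :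
    v a = (((1 - β) * N - ∑ b ∈ B, n N b) * M.dB B (n N) + n N a * M.dMix (n N) a a) /
      (N * M.dMix (n N) a a) := by
  have hN := h.time_pos
  have hD := h.dMix_self_pos ha
  have hrate := h.index_rate_eq ha
  rw [h.index_eq_add ha] at hrate
  rw [eq_div_iff (by positivity)]
  field_simp at hrate
  linarith

lemma mul_dB_le_index_rate (h : M.IsFluidAt β B n v I N) (hB : B.Nonempty) :
    (1 - β) * M.dB B (n N) ≤ (1 - β - (∑ a ∈ B, n N a) / N) * M.dB B (n N) + I N / N := by
  rw [← h.sum_rate]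
  refine sum_mul_inv_sum_inv_le hB (fun a ha => h.dMix_self_pos ha) fun a ha => ?_
  rw [h.sum_rate, h.index_rate_eq ha]
  exact le_add_of_nonneg_left <|
    mul_nonneg h.share_pos.le (M.dMix_nonneg 0 (h.ne_zero ha) (h.pos 0) (h.pos a))

end IsFluidAt

end Bandit

/-- Proposition B.10, fluid ODEs for β-EB-TCB: along a β-fluid
trajectory keeping `N₁ = β·N` and the indexes in `B` equal, the allocation rates and the
index derivative are given by the stated formulas; the index derivative is bounded below
by a constant `c > 0` depending only on `μ` and `β`, while the indexes of the arms off
`B` stay bounded by `N_a⁰·d(μ_a, μ_1)`. -/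
theorem statement_17 {K : ℕ} [NeZero K] (M : Bandit K)
    (β : ℝ) (hβ : β ∈ Set.Ioo (0 : ℝ) 1) :
    ∃ c : ℝ, 0 < c ∧
      ∀ B : Finset (Fin K), B.Nonempty → B ⊆ alt K →
      ∀ J : Set ℝ, IsOpen J → Set.OrdConnected J → J ⊆ Set.Ioi 0 →
      ∀ (Nf Nf' : ℝ → Fin K → ℝ) (IB : ℝ → ℝ),
        (∀ N ∈ J, ∀ a, 0 < Nf N a) →
        (∀ N ∈ J, ∀ a, HasDerivAt (fun t => Nf t a) (Nf' N a) N) →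
        (∀ N ∈ J, ∑ a, Nf N a = N) →
        (∀ N ∈ J, Nf N 0 = β * N) →
        (∀ a ∈ alt K \ B, ∀ N ∈ J, ∀ N' ∈ J, Nf N a = Nf N' a) →
        (∀ N ∈ J, ∀ a ∈ B, M.W a (Nf N 0) (Nf N a) = IB N) →
        ∀ N ∈ J,
          -- (1) allocation rates
          Nf' N 0 = β ∧
          (∀ b ∈ B, Nf' N b =
            (((1 - β) * N - ∑ a ∈ B, Nf N a) * M.dB B (Nf N) +
                Nf N b * M.d (M.μ b) (M.x1 b (Nf N 0) (Nf N b))) /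
              (N * M.d (M.μ b) (M.x1 b (Nf N 0) (Nf N b)))) ∧
          -- (2) index ODE
          HasDerivAt IB
            ((1 - β - (∑ a ∈ B, Nf N a) / N) * M.dB B (Nf N) + IB N / N) N ∧
          -- (3) uniform lower bound on the index derivative, and bounded indexes off `B`
          c ≤ (1 - β - (∑ a ∈ B, Nf N a) / N) * M.dB B (Nf N) + IB N / N ∧
          (∀ a ∈ alt K \ B,
            M.W a (Nf N 0) (Nf N a) ≤ Nf N a * M.d (M.μ a) (M.μ 0)) := by
  have hβ' : 0 < 1 - β := sub_pos.2 hβ.2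
  obtain ⟨δ, hδ, hδ_le⟩ := M.exists_pos_le_dB (div_pos hβ' hβ.1)
  refine ⟨(1 - β) * δ, mul_pos hβ' hδ, ?_⟩
  intro B hB hBalt J hJ _ _ Nf Nf' IB hpos hderiv hsum hbest hoff hindex N hN
  have hnhds := hJ.eventually_mem hN
  have h : M.IsFluidAt β B Nf (Nf' N) IB N :=
    { subset_alt := hBalt
      pos := hpos N hN
      hasDerivAt := hderiv N hN
      sum_eq := hnhds.mono hsum
      best_eq := hnhds.mono hbest
      off_eq := fun a ha => hnhds.mono fun t ht => hoff a ha t ht N hN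
      index_eq := fun a ha => hnhds.mono fun t ht => hindex t ht a ha }
  have hdB : δ ≤ M.dB B (Nf N) :=
    hδ_le B (Nf N) hB hBalt (h.pos 0) (fun a _ => h.pos a) fun a => h.le_ratio_mul_best
  exact ⟨h.rate_best, fun b => h.rate_eq, h.hasDerivAt_index hB,
    (mul_le_mul_of_nonneg_left hdB hβ'.le).trans (h.mul_dB_le_index_rate hB),
    fun a ha => M.W_le (ne_zero_of_mem_alt (Finset.mem_sdiff.1 ha).1) (h.pos 0) (h.pos a)⟩
end

section
/- Under the exploration rule, there exists a constant M > 0, depending only on K and α, such that: (1) every epoch of exploration beginning at an iteration N ≥ M has length at most K, and during that epoch each arm is pulled at most once; (2) if an epoch of exploration begins at iteration N ≥ M and the next epoch of exploration begins at iteration N + T, then T ≥ (1/α)·(N−1)^{1−α} − 1 (so consecutive epochs are separated by Θ(N^{1−α}) iterations). -/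
/-- Number of pulls of arm `a` in the first `N` iterations (iterations are numbered
starting from `1`). -/
def pulls {K : ℕ} (A : ℕ → Fin K) (a : Fin K) (N : ℕ) : ℕ :=
  ((Finset.Icc 1 N).filter fun n => A n = a).card

/-- Iteration `N ≥ 1` is an exploration if the least-sampled arm has fewer than `N^α`
pulls, i.e. `min_a Ñ_a(N−1) < N^α`. -/
def isExplo {K : ℕ} (α : ℝ) (A : ℕ → Fin K) (N : ℕ) : Prop :=
  1 ≤ N ∧ ∃ a : Fin K, (pulls A a (N - 1) : ℝ) < (N : ℝ) ^ α

/-- The exploration rule: at every exploration iteration, a least-sampled arm is pulled. -/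
def ExploRule {K : ℕ} (α : ℝ) (A : ℕ → Fin K) : Prop :=
  ∀ N : ℕ, isExplo α A N → ∀ b : Fin K, pulls A (A N) (N - 1) ≤ pulls A b (N - 1)

/-!
After a non-exploration iteration `m` every arm has at least `m ^ α` pulls. If the count of some
arm is at least `m ^ α + 1`, yet below the threshold `n ^ α` of a later exploration `n`, then
`m ^ α + 1 ≤ n ^ α`, and weighted AM-GM turns this into `m ^ (1 - α) ≤ α * (n - m)`. This happens
when an epoch starting right after `m` pulls an arm for the second time, at iteration `n`; it also
happens when the next epoch starts at `n`: at iteration `n - 1` the minimal count is at least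
`(n - 1) ^ α`, whereas at the start of the first epoch it was smaller than `(m + 1) ^ α`, so it has
increased, and hence by at least one. For large `m` the first event is impossible during the first
`K + 1` iterations of an epoch, and the pigeonhole principle bounds the length by `K`.
-/

theorem rpow_one_sub_le_mul_sub_of_rpow_add_one_le {α x y : ℝ} (h₀ : 0 ≤ α) (h₁ : α ≤ 1)
    (hx : 0 ≤ x) (hy : 0 ≤ y) (h : x ^ α + 1 ≤ y ^ α) : x ^ (1 - α) ≤ α * (y - x) := by
  have amgm : x ^ (1 - α) * y ^ α ≤ (1 - α) * x + α * y :=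
    Real.geom_mean_le_arith_mean2_weighted (sub_nonneg.2 h₁) h₀ hx hy (sub_add_cancel 1 α)
  have hmul : x ^ (1 - α) * x ^ α = x := by
    rw [← Real.rpow_add_of_nonneg hx (sub_nonneg.2 h₁) h₀, sub_add_cancel, Real.rpow_one]
  have hscaled : x ^ (1 - α) * (x ^ α + 1) ≤ x ^ (1 - α) * y ^ α := by gcongr
  linarith

section Exploration

variable {K : ℕ} {α : ℝ} {A : ℕ → Fin K} {m n : ℕ}

theorem pulls_mono (A : ℕ → Fin K) (a : Fin K) : Monotone (pulls A a) := fun _ _ h =>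
  Finset.card_le_card (Finset.filter_subset_filter _ (Finset.Icc_subset_Icc_right h))

theorem pulls_lt_pulls {k : ℕ} (hmn : m < n) (hnk : n ≤ k) :
    pulls A (A n) m < pulls A (A n) k := by
  refine Finset.card_lt_card (Finset.ssubset_iff_of_subset ?_ |>.2 ⟨n, ?_⟩)
  · exact Finset.filter_subset_filter _ (Finset.Icc_subset_Icc_right (hmn.le.trans hnk))
  · simp only [Finset.mem_filter, Finset.mem_Icc, and_true]
    omega

theorem not_isExplo_zero : ¬ isExplo α A 0 := fun h => Nat.not_succ_le_zero 0 h.1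

theorem rpow_le_pulls_of_not_isExplo (h₀ : α ≠ 0) (hn : ¬ isExplo α A n) (a : Fin K) :
    (n : ℝ) ^ α ≤ pulls A a n := by
  rcases Nat.eq_zero_or_pos n with rfl | hpos
  · simp [Real.zero_rpow h₀]
  · have hprev : (n : ℝ) ^ α ≤ pulls A a (n - 1) := not_lt.1 fun hlt => hn ⟨hpos, a, hlt⟩
    exact hprev.trans (Nat.cast_le.2 (pulls_mono A a (Nat.sub_le n 1)))

namespace ExploRule

theorem pulls_lt_rpow (hA : ExploRule α A) (hn : isExplo α A n) :
    (pulls A (A n) (n - 1) : ℝ) < (n : ℝ) ^ α := by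
  obtain ⟨a, ha⟩ := hn.2
  exact (Nat.cast_le.2 (hA n hn a)).trans_lt ha

theorem rpow_one_sub_le_of_apply_eq (hA : ExploRule α A) (h₀ : 0 < α) (h₁ : α ≤ 1)
    (hm : ¬ isExplo α A m) {k : ℕ} (hmk : m < k) (hkn : k < n) (hn : isExplo α A n)
    (hrepeat : A k = A n) : (m : ℝ) ^ (1 - α) ≤ α * (n - m) := by
  refine rpow_one_sub_le_mul_sub_of_rpow_add_one_le h₀.le h₁ m.cast_nonneg n.cast_nonneg ?_
  calc (m : ℝ) ^ α + 1 ≤ pulls A (A k) m + 1 := by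
        gcongr
        exact rpow_le_pulls_of_not_isExplo h₀.ne' hm _
    _ ≤ pulls A (A k) (n - 1) := by exact_mod_cast pulls_lt_pulls hmk (Nat.le_sub_one_of_lt hkn)
    _ ≤ (n : ℝ) ^ α := hrepeat ▸ (hA.pulls_lt_rpow hn).le

theorem injOn_of_forall_isExplo (hA : ExploRule α A) (h₀ : 0 < α) (h₁ : α ≤ 1)
    (hm : ¬ isExplo α A m) (hrun : ∀ k ∈ Finset.Icc (m + 1) n, isExplo α A k)
    (hshort : α * (n - m) < (m : ℝ) ^ (1 - α)) :
    Set.InjOn A (Finset.Icc (m + 1) n) := by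
  have hne {k l : ℕ} (hmk : m < k) (hkl : k < l) (hln : l ≤ n) : A k ≠ A l := fun hrepeat => by
    have hlong := hA.rpow_one_sub_le_of_apply_eq h₀ h₁ hm hmk hkl
      (hrun l (Finset.mem_Icc.2 ⟨hmk.trans hkl, hln⟩)) hrepeat
    have hmono : α * ((l : ℝ) - m) ≤ α * (n - m) := by gcongr
    linarith
  intro k hk l hl heq
  simp only [Finset.coe_Icc, Set.mem_Icc] at hk hl
  rcases lt_trichotomy k l with hkl | rfl | hlk
  · exact absurd heq (hne hk.1 hkl hl.2)
  · rfl
  · exact absurd heq.symm (hne hl.1 hlk hk.2)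

theorem le_add_of_forall_isExplo (hA : ExploRule α A) (h₀ : 0 < α) (h₁ : α ≤ 1)
    (hm : ¬ isExplo α A m) (hrun : ∀ k ∈ Finset.Icc (m + 1) n, isExplo α A k)
    (hlarge : α * (K + 1) < (m : ℝ) ^ (1 - α)) : n ≤ m + K := by
  by_contra! hlong
  have hinj : Set.InjOn A (Finset.Icc (m + 1) (m + K + 1)) := by
    refine hA.injOn_of_forall_isExplo h₀ h₁ hm
      (fun k hk => hrun k (Finset.Icc_subset_Icc_right hlong hk)) ?_
    convert hlarge using 2
    push_cast
    ring
  have hcard := Finset.card_le_card_of_injOn A (fun _ _ => Finset.mem_univ _) hinj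
  simp only [Nat.card_Icc, Finset.card_univ, Fintype.card_fin] at hcard
  omega

theorem card_filter_apply_eq_le_one (hA : ExploRule α A) (h₀ : 0 < α) (h₁ : α ≤ 1)
    (hm : ¬ isExplo α A m) (hrun : ∀ k ∈ Finset.Icc (m + 1) n, isExplo α A k)
    (hlarge : α * (K + 1) < (m : ℝ) ^ (1 - α)) (a : Fin K) :
    ((Finset.Icc (m + 1) n).filter fun k => A k = a).card ≤ 1 := by
  have hlen : (n : ℝ) ≤ m + K := by
    exact_mod_cast hA.le_add_of_forall_isExplo h₀ h₁ hm hrun hlarge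
  have hshort : α * ((n : ℝ) - m) ≤ α * (K + 1) := by
    gcongr
    linarith
  have hinj := hA.injOn_of_forall_isExplo h₀ h₁ hm hrun (hshort.trans_lt hlarge)
  refine Finset.card_le_one.2 fun k hk l hl => ?_
  rw [Finset.mem_filter] at hk hl
  exact hinj hk.1 hl.1 (hk.2.trans hl.2.symm)

end ExploRule

theorem rpow_one_sub_le_of_isExplo_succ (h₀ : 0 < α) (h₁ : α ≤ 1) (hmn : m < n)
    (hm : ¬ isExplo α A m) (hm' : isExplo α A (m + 1))
    (hn : ¬ isExplo α A n) (hn' : isExplo α A (n + 1)) :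
    (m : ℝ) ^ (1 - α) ≤ α * (n + 1 - m) := by
  obtain ⟨-, a, ha⟩ := hm'
  obtain ⟨-, b, hb⟩ := hn'
  simp only [Nat.add_sub_cancel, Nat.cast_add_one] at ha hb
  have hab : (pulls A a m : ℝ) < pulls A b n :=
    calc (pulls A a m : ℝ) < ((m : ℝ) + 1) ^ α := ha
      _ ≤ (n : ℝ) ^ α := by
        gcongr
        exact_mod_cast hmn
      _ ≤ pulls A b n := rpow_le_pulls_of_not_isExplo h₀.ne' hn b
  refine rpow_one_sub_le_mul_sub_of_rpow_add_one_le h₀.le h₁ m.cast_nonneg (by positivity) ?_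
  calc (m : ℝ) ^ α + 1 ≤ pulls A a m + 1 := by
        gcongr
        exact rpow_le_pulls_of_not_isExplo h₀.ne' hm a
    _ ≤ pulls A b n := by exact_mod_cast hab
    _ ≤ ((n : ℝ) + 1) ^ α := hb.le

theorem one_div_mul_rpow_sub_one_le_of_isExplo_add {N T : ℕ} (h₀ : 0 < α) (h₁ : α ≤ 1)
    (hT : 1 ≤ T) (hN : isExplo α A N) (hN' : ¬ isExplo α A (N - 1))
    (hNT : isExplo α A (N + T)) (hNT' : ¬ isExplo α A (N + T - 1)) :
    (1 / α) * ((N : ℝ) - 1) ^ (1 - α) - 1 ≤ (T : ℝ) := by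
  obtain ⟨m, rfl⟩ := Nat.exists_eq_add_of_le' hN.1
  rw [Nat.add_sub_cancel] at hN'
  rw [Nat.add_right_comm] at hNT hNT'
  have hgap := rpow_one_sub_le_of_isExplo_succ h₀ h₁ (Nat.lt_add_of_pos_right hT) hN' hN hNT' hNT
  rw [sub_le_iff_le_add, one_div, inv_mul_le_iff₀ h₀, Nat.cast_add_one, add_sub_cancel_right]
  exact hgap.trans_eq (by push_cast; ring)

end Exploration

theorem statement_19_general (K : ℕ) (α : ℝ) (hα : α ∈ Set.Ioo (0 : ℝ) 1) :
    (∃ M : ℝ, 0 < M ∧ ∀ A : ℕ → Fin K, ExploRule α A →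
      ∀ N₁ N₂ : ℕ, M ≤ (N₁ : ℝ) →
        (∀ n ∈ Finset.Icc N₁ N₂, isExplo α A n) →
        (N₁ = 1 ∨ ¬ isExplo α A (N₁ - 1)) →
        ((N₂ : ℝ) - N₁ + 1 ≤ (K : ℝ) ∧
          ∀ a : Fin K, ((Finset.Icc N₁ N₂).filter fun n => A n = a).card ≤ 1)) ∧
    (∀ A : ℕ → Fin K, ∀ N T : ℕ, 1 ≤ T →
      isExplo α A N → ¬ isExplo α A (N - 1) →
      isExplo α A (N + T) → ¬ isExplo α A (N + T - 1) →
      (1 / α) * ((N : ℝ) - 1) ^ (1 - α) - 1 ≤ (T : ℝ)) := by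
  obtain ⟨h₀, h₁⟩ := hα
  refine ⟨⟨((K : ℝ) + 1) ^ (1 - α)⁻¹ + 1, by positivity, fun A hA N₁ N₂ hM hrun hstart => ?_⟩,
    fun A N T => one_div_mul_rpow_sub_one_le_of_isExplo_add h₀ h₁.le⟩
  have hN₁ : 1 ≤ N₁ := by
    have : (1 : ℝ) ≤ N₁ := le_trans (le_add_of_nonneg_left (by positivity)) hM
    exact_mod_cast this
  obtain ⟨m, rfl⟩ := Nat.exists_eq_add_of_le' hN₁
  have hm : ¬ isExplo α A m :=
    hstart.elim (fun h => Nat.succ_injective h ▸ not_isExplo_zero) id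
  have hlarge : α * (K + 1) < (m : ℝ) ^ (1 - α) :=
    calc α * ((K : ℝ) + 1) < K + 1 := mul_lt_of_lt_one_left (by positivity) h₁
      _ ≤ (m : ℝ) ^ (1 - α) := by
        rw [← Real.rpow_inv_le_iff_of_pos (by positivity) m.cast_nonneg (sub_pos.2 h₁)]
        simpa using hM
  have hlen : (N₂ : ℝ) ≤ m + K := by
    exact_mod_cast hA.le_add_of_forall_isExplo h₀ h₁.le hm hrun hlarge
  refine ⟨?_, hA.card_filter_apply_eq_le_one h₀ h₁.le hm hrun hlarge⟩
  push_cast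
  linarith

/-- Proposition C.1 (3)–(4): beyond a constant time `M` depending only
on `K` and `α`, every epoch of exploration has length at most `K` with each arm pulled at
most once, and consecutive epochs of exploration are separated by at least
`(1/α)·(N−1)^{1−α} − 1` iterations. -/
theorem statement_19 (K : ℕ) (hK : 2 ≤ K) (α : ℝ) (hα : α ∈ Set.Ioo (0 : ℝ) 1) :
    ∃ M : ℝ, 0 < M ∧
      -- (1) short epochs, each arm pulled at most once
      (∀ A : ℕ → Fin K, ExploRule α A →
        ∀ N₁ N₂ : ℕ, M ≤ (N₁ : ℝ) → N₁ ≤ N₂ →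
          (∀ n ∈ Finset.Icc N₁ N₂, isExplo α A n) →
          (N₁ = 1 ∨ ¬ isExplo α A (N₁ - 1)) →
          ((N₂ : ℝ) - N₁ + 1 ≤ (K : ℝ) ∧
            ∀ a : Fin K, ((Finset.Icc N₁ N₂).filter fun n => A n = a).card ≤ 1)) ∧
      -- (2) separation between consecutive epochs
      (∀ A : ℕ → Fin K, ExploRule α A →
        ∀ N T : ℕ, M ≤ (N : ℝ) → 1 ≤ T →
          isExplo α A N → ¬ isExplo α A (N - 1) →
          isExplo α A (N + T) → ¬ isExplo α A (N + T - 1) →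
          (1 / α) * ((N : ℝ) - 1) ^ (1 - α) - 1 ≤ (T : ℝ)) := by
  obtain ⟨⟨M, hM, hepoch⟩, hgap⟩ := statement_19_general K α hα
  exact ⟨M, hM, fun A hA N₁ N₂ hN _ => hepoch A hA N₁ N₂ hN, fun A _ N T _ => hgap A N T⟩
end
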